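/- arXiv:2302.05810 — 4 statements merged into one kernel-verified Lean document; each statement's English description precedes it below -/
import Mathlib

section
/- The Random Dictator mechanism, which outputs the preferred budget of a voter chosen uniformly at random, has distortion exactly 2. Precisely: (a) for all m ≥ 1, n ≥ 1 and every vote profile (v_1,…,v_n) of budgets on m projects, Σ_{i=1}^n Σ_{l=1}^n d(v_i, v_l) ≤ 2·n·min_{p∈𝔹} Σ_{l=1}^n d(p, v_l); and (b) for every ε > 0 there exist m, n and a vote profile (v_1,…,v_n) of budgets on m projects with min_{p∈𝔹} Σ_{l=1}^n d(p, v_l) > 0 such that Σ_{i=1}^n Σ_{l=1}^n d(v_i, v_l) > (2 − ε)·n·min_{p∈𝔹} Σ_{l=1}^n d(p, v_l). -/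
/-- A budget on `m` projects: nonnegative allocations summing to 1. -/
def IsBudget {m : ℕ} (b : Fin m → ℝ) : Prop :=
  (∀ j, 0 ≤ b j) ∧ ∑ j, b j = 1

/-- The ℓ₁ cost `d(a,b)`. -/
noncomputable def cost {m : ℕ} (a b : Fin m → ℝ) : ℝ := ∑ j, |a j - b j|

/-!
The upper bound holds in any pseudometric space: `d(v_i, v_l) ≤ d(p, v_i) + d(p, v_l)`, and summing
over all pairs counts each `d(p, v_l)` exactly `2 n` times. It is asymptotically attained by `k`
voters at a point `a` against a single dissenter at `b`: the optimum `a` costs only `d(a, b)`,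
whereas each of the `2 k` ordered disagreeing pairs costs `d(a, b)`, so the ratio is
`2 k / (k + 1)`.
-/

/-- The profile of a single voter at `b`, with index `0`, against `k` voters at `a`; as `k` grows,
its distortion under Random Dictator tends to `2`. -/
def loneDissenter {X : Type*} (a b : X) (k : ℕ) : Fin (k + 1) → X :=
  Fin.cons b fun _ => a

section PseudoMetricSpace

variable {X : Type*} [PseudoMetricSpace X]

theorem sum_sum_dist_le {ι : Type*} [Fintype ι] (v : ι → X) (p : X) :
    ∑ i, ∑ l, dist (v i) (v l) ≤ 2 * Fintype.card ι * ∑ l, dist p (v l) :=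
  calc ∑ i, ∑ l, dist (v i) (v l)
    _ ≤ ∑ i, ∑ l, (dist p (v i) + dist p (v l)) := by
        gcongr with i _ l _
        exact dist_triangle_left (v i) (v l) p
    _ = 2 * Fintype.card ι * ∑ l, dist p (v l) := by
        simp only [Finset.sum_add_distrib, Finset.sum_const, Finset.card_univ, nsmul_eq_mul,
          ← Finset.mul_sum]
        ring

namespace loneDissenter

theorem sum_dist (a b p : X) (k : ℕ) :
    ∑ l, dist p (loneDissenter a b k l) = dist p b + k * dist p a := by
  simp [loneDissenter, Fin.sum_univ_succ]

theorem sum_dist_majority (a b : X) (k : ℕ) :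
    ∑ l, dist a (loneDissenter a b k l) = dist a b := by
  simp [sum_dist]

theorem sum_dist_majority_le (a b p : X) {k : ℕ} (hk : 1 ≤ k) :
    ∑ l, dist a (loneDissenter a b k l) ≤ ∑ l, dist p (loneDissenter a b k l) := by
  have hk' : (1 : ℝ) ≤ k := mod_cast hk
  calc ∑ l, dist a (loneDissenter a b k l)
    _ = dist a b := sum_dist_majority a b k
    _ ≤ dist p a + dist p b := dist_triangle_left a b p
    _ ≤ dist p b + k * dist p a := by
        rw [add_comm]
        gcongr
        exact le_mul_of_one_le_left dist_nonneg hk'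
    _ = ∑ l, dist p (loneDissenter a b k l) := (sum_dist a b p k).symm

theorem sum_sum_dist (a b : X) (k : ℕ) :
    ∑ i, ∑ l, dist (loneDissenter a b k i) (loneDissenter a b k l) = 2 * k * dist a b := by
  simp_rw [sum_dist, Fin.sum_univ_succ]
  simp only [loneDissenter, Fin.cons_zero, Fin.cons_succ, dist_self, dist_comm b a,
    Finset.sum_const, Finset.card_univ, Fintype.card_fin, nsmul_eq_mul]
  ring

end loneDissenter

theorem random_dictator_distortion_two_general (X : Type*) [PseudoMetricSpace X] :
    (∀ (n : ℕ) (v : Fin n → X) (p : X),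
      ∑ i, ∑ l, dist (v i) (v l) ≤ 2 * n * ∑ l, dist p (v l)) ∧
    (∀ a b : X, dist a b ≠ 0 → ∀ ε : ℝ, 0 < ε → ∃ (n : ℕ) (v : Fin n → X) (popt : X),
      (∀ p, ∑ l, dist popt (v l) ≤ ∑ l, dist p (v l)) ∧
      0 < ∑ l, dist popt (v l) ∧
      (2 - ε) * (n * ∑ l, dist popt (v l)) < ∑ i, ∑ l, dist (v i) (v l)) := by
  refine ⟨fun n v p => by simpa using sum_sum_dist_le v p, fun a b hab ε hε => ?_⟩
  have hpos : 0 < dist a b := dist_nonneg.lt_of_ne' hab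
  obtain ⟨k, hk⟩ := exists_nat_gt (2 / ε)
  have hk_pos : 0 < k := mod_cast (div_pos two_pos hε).trans hk
  have hratio : (2 - ε) * (k + 1 : ℕ) < 2 * k := by
    rw [div_lt_iff₀ hε] at hk
    push_cast
    linarith
  refine ⟨k + 1, loneDissenter a b k, a,
    fun p => loneDissenter.sum_dist_majority_le a b p hk_pos, ?_, ?_⟩
  · rwa [loneDissenter.sum_dist_majority]
  · rw [loneDissenter.sum_dist_majority, loneDissenter.sum_sum_dist, ← mul_assoc]
    exact mul_lt_mul_of_pos_right hratio hpos

end PseudoMetricSpace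

/-- The budget simplex as a subspace of `ℓ¹`, so that its distance is `cost`. -/
abbrev Budget (m : ℕ) : Type :=
  {b : PiLp 1 fun _ : Fin m => ℝ // IsBudget b.ofLp}

namespace Budget

theorem dist_eq_cost {m : ℕ} (a b : Budget m) : dist a b = cost a.1.ofLp b.1.ofLp := by
  rw [Subtype.dist_eq, PiLp.dist_eq_of_L1]
  rfl

/-- The budget spending everything on project `j`, i.e. a vertex of the simplex. -/
def vertex {m : ℕ} (j : Fin m) : Budget m :=
  ⟨PiLp.single 1 j 1, single_mem_stdSimplex ℝ j⟩

theorem vertex_injective {m : ℕ} : Function.Injective (vertex (m := m)) := by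
  intro i j h
  have hi : (Pi.single i 1 : Fin m → ℝ) i = (Pi.single j 1 : Fin m → ℝ) i :=
    congrArg (fun b : Budget m => b.1 i) h
  by_contra hij
  simp [hij] at hi

end Budget

/-- The Random Dictator mechanism has distortion exactly 2:
(a) for every vote profile, `Σ_i Σ_l d(v_i, v_l) ≤ 2·n·min_{p∈𝔹} Σ_l d(p, v_l)`
    (expressed equivalently as a bound against every `p ∈ 𝔹`); and
(b) for every `ε > 0` there is an instance with positive optimal social cost where
    `Σ_i Σ_l d(v_i, v_l) > (2 − ε)·n·min_{p∈𝔹} Σ_l d(p, v_l)`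
    (expressed via a minimizer `popt`). -/
theorem random_dictator_distortion_two :
    (∀ (m n : ℕ), 1 ≤ m → 1 ≤ n → ∀ v : Fin n → Fin m → ℝ, (∀ i, IsBudget (v i)) →
      ∀ p : Fin m → ℝ, IsBudget p →
        ∑ i, ∑ l, cost (v i) (v l) ≤ 2 * n * ∑ l, cost p (v l)) ∧
    (∀ ε : ℝ, 0 < ε → ∃ (m n : ℕ) (v : Fin n → Fin m → ℝ) (popt : Fin m → ℝ),
      (∀ i, IsBudget (v i)) ∧ IsBudget popt ∧
      (∀ p : Fin m → ℝ, IsBudget p → ∑ l, cost popt (v l) ≤ ∑ l, cost p (v l)) ∧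
      0 < ∑ l, cost popt (v l) ∧
      (2 - ε) * (n * ∑ l, cost popt (v l)) < ∑ i, ∑ l, cost (v i) (v l)) := by
  refine ⟨fun m n _ _ v hv p hp => ?_, fun ε hε => ?_⟩
  · simpa only [Budget.dist_eq_cost] using (random_dictator_distortion_two_general (Budget m)).1 n
      (fun i => ⟨WithLp.toLp 1 (v i), hv i⟩) ⟨WithLp.toLp 1 p, hp⟩
  · obtain ⟨n, v, popt, hmin, hpos, hlower⟩ := (random_dictator_distortion_two_general (Budget 2)).2
      (Budget.vertex 0) (Budget.vertex 1)
      (dist_ne_zero.mpr (Budget.vertex_injective.ne zero_ne_one)) ε hε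
    simp only [Budget.dist_eq_cost] at hmin hpos hlower
    exact ⟨2, n, fun i => (v i).1.ofLp, popt.1.ofLp, fun i => (v i).2, popt.2,
      fun p hp => hmin ⟨WithLp.toLp 1 p, hp⟩, hpos, hlower⟩
end

section
/- Every Random Referee mechanism has distortion at least 2. Precisely: for every rule r that, given a vote profile P = (v_1,…,v_n) and an ordered triple (i,j,k) ∈ [n]³ of voters sampled uniformly at random with replacement, outputs either v_i or v_j (the choice being an arbitrary function of P, i, j, k), and for every ε > 0, there exist m, n and a vote profile of budgets on m projects with min_{p∈𝔹} Σ_{l=1}^n d(p, v_l) > 0 such that (1/n³) Σ_{(i,j,k)∈[n]³} Σ_{l=1}^n d(r(P,i,j,k), v_l) > (2 − ε)·min_{p∈𝔹} Σ_{l=1}^n d(p, v_l). -/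
/-!
Start from the uniform budget on `n + n` projects and let voter `i` move an amount `δ` from project
`n + i` to project `i`. The votes sit at the tips of a star: each is at distance `2 * δ` from the
uniform budget, and any two are at distance `4 * δ`. Pairing the voters cyclically and applying the
triangle inequality to every pair shows that the uniform budget is optimal, at cost `n * (2 * δ)`,
whereas every vote costs `(n - 1) * (4 * δ)`. This profile does not depend on the rule, and no vote
has a ratio below `2 - 2 / n`, so averaging over the sampled voters cannot help.
-/

theorem sum_dist_le_sum_dist_of_perm {ι X : Type*} [Fintype ι] [PseudoMetricSpace X]
    {v : ι → X} {c : X} (σ : Equiv.Perm ι)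
    (hc : ∀ i, dist (v i) c + dist c (v (σ i)) = dist (v i) (v (σ i))) (p : X) :
    ∑ i, dist c (v i) ≤ ∑ i, dist p (v i) := by
  have sum_via (q : X) : ∑ i, (dist (v i) q + dist q (v (σ i))) = 2 * ∑ i, dist q (v i) := by
    rw [Finset.sum_add_distrib, Equiv.sum_comp σ fun i ↦ dist q (v i), two_mul]
    simp only [dist_comm]
  have : 2 * ∑ i, dist c (v i) ≤ 2 * ∑ i, dist p (v i) :=
    calc 2 * ∑ i, dist c (v i)
        = ∑ i, dist (v i) (v (σ i)) := by simp only [← sum_via, hc]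
      _ ≤ ∑ i, (dist (v i) p + dist p (v (σ i))) := by gcongr; exact dist_triangle ..
      _ = 2 * ∑ i, dist p (v i) := sum_via p
  linarith

theorem lt_triple_average {ι 𝕜 : Type*} [Fintype ι] [Nonempty ι] [Field 𝕜] [LinearOrder 𝕜]
    [IsStrictOrderedRing 𝕜] {a : 𝕜} {f : ι → ι → ι → 𝕜} (h : ∀ i j k, a < f i j k) :
    a < (1 / (Fintype.card ι : 𝕜) ^ 3) * ∑ i, ∑ j, ∑ k, f i j k :=
  calc a = (1 / (Fintype.card ι : 𝕜) ^ 3) * ∑ _i : ι, ∑ _j : ι, ∑ _k : ι, a := by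
        simp only [Finset.sum_const, Finset.card_univ, nsmul_eq_mul]
        field_simp
    _ < _ := by
        gcongr
        any_goals exact Finset.univ_nonempty
        exact h _ _ _

section Cost

variable {m n : ℕ}

theorem cost_eq_dist (a b : Fin m → ℝ) :
    cost a b = dist (WithLp.toLp 1 a) (WithLp.toLp 1 b) := by
  simp only [cost, PiLp.dist_eq_of_L1, Real.dist_eq]

theorem cost_self (a : Fin m → ℝ) : cost a a = 0 := by
  simp only [cost_eq_dist, dist_self]

theorem cost_comm (a b : Fin m → ℝ) : cost a b = cost b a := by
  simp only [cost_eq_dist, dist_comm]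

theorem cost_add_left (c a b : Fin m → ℝ) : cost (c + a) (c + b) = cost a b := by
  simp only [cost, Pi.add_apply, add_sub_add_left_eq_sub]

theorem cost_self_add (c a : Fin m → ℝ) : cost c (c + a) = ∑ j, |a j| := by
  simp only [cost, Pi.add_apply, sub_add_cancel_left, abs_neg]

theorem cost_append (a a' : Fin m → ℝ) (b b' : Fin n → ℝ) :
    cost (Fin.append a b) (Fin.append a' b') = cost a a' + cost b b' := by
  simp only [cost, Fin.sum_univ_add, Fin.append_left, Fin.append_right]

theorem cost_single_single {i j : Fin m} (hij : i ≠ j) (x y : ℝ) :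
    cost (Pi.single i x) (Pi.single j y) = |x| + |y| := by
  have abs_sub_apply (k : Fin m) : |(Pi.single i x : Fin m → ℝ) k - (Pi.single j y : Fin m → ℝ) k| =
      (Pi.single i |x| : Fin m → ℝ) k + (Pi.single j |y| : Fin m → ℝ) k := by
    obtain rfl | hki := eq_or_ne k i
    · simp [hij]
    · obtain rfl | hkj := eq_or_ne k j <;> simp [*]
  simp [cost, abs_sub_apply, Finset.sum_add_distrib]

theorem sum_cost_le_sum_cost_of_perm {v : Fin n → Fin m → ℝ} {c : Fin m → ℝ}
    (σ : Equiv.Perm (Fin n))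
    (hc : ∀ i, cost (v i) c + cost c (v (σ i)) = cost (v i) (v (σ i))) (p : Fin m → ℝ) :
    ∑ i, cost c (v i) ≤ ∑ i, cost p (v i) := by
  simp only [cost_eq_dist] at hc ⊢
  exact sum_dist_le_sum_dist_of_perm σ hc _

end Cost

theorem isBudget_const_inv {m : ℕ} [NeZero m] : IsBudget (fun _ : Fin m ↦ (m : ℝ)⁻¹) :=
  ⟨fun _ ↦ by positivity, by simp⟩

/-- The transfer of an amount `δ` from project `n + i` to project `i`, as a change of a budget on
`n + n` projects. -/
def transfer {n : ℕ} (δ : ℝ) (i : Fin n) : Fin (n + n) → ℝ :=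
  Fin.append (Pi.single i δ) (Pi.single i (-δ))

section Transfer

variable {n : ℕ} {δ : ℝ}

theorem sum_transfer (i : Fin n) : ∑ j, transfer δ i j = 0 := by
  simp only [transfer, Fin.sum_univ_add, Fin.append_left, Fin.append_right]
  simp

theorem sum_abs_transfer (i : Fin n) : ∑ j, |transfer δ i j| = 2 * |δ| := by
  simp only [transfer, Fin.sum_univ_add, Fin.append_left, Fin.append_right]
  simp [Pi.single_apply, apply_ite, two_mul]

theorem abs_transfer_le (i : Fin n) (j : Fin (n + n)) : |transfer δ i j| ≤ |δ| := by
  refine Fin.addCases (fun k ↦ ?_) (fun k ↦ ?_) j <;>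
    simp only [transfer, Fin.append_left, Fin.append_right, Pi.single_apply] <;>
    split_ifs <;> simp

theorem IsBudget.add_transfer {c : Fin (n + n) → ℝ} (hc : IsBudget c) (hδ : ∀ j, |δ| ≤ c j)
    (i : Fin n) : IsBudget (c + transfer δ i) := by
  refine ⟨fun j ↦ ?_, ?_⟩
  · rw [Pi.add_apply, ← neg_le_iff_add_nonneg']
    exact neg_le_of_abs_le ((abs_transfer_le i j).trans (hδ j))
  · simp only [Pi.add_apply, Finset.sum_add_distrib, hc.2, sum_transfer, add_zero]

theorem cost_self_add_transfer (c : Fin (n + n) → ℝ) (i : Fin n) :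
    cost c (c + transfer δ i) = 2 * |δ| := by
  rw [cost_self_add, sum_abs_transfer]

theorem cost_add_transfer (c : Fin (n + n) → ℝ) {i j : Fin n} (hij : i ≠ j) :
    cost (c + transfer δ i) (c + transfer δ j) = 4 * |δ| := by
  rw [cost_add_left, transfer, transfer, cost_append, cost_single_single hij,
    cost_single_single hij, abs_neg]
  ring

theorem sum_cost_self_add_transfer (c : Fin (n + n) → ℝ) :
    ∑ i, cost c (c + transfer δ i) = n * (2 * |δ|) := by
  simp only [cost_self_add_transfer, Finset.sum_const, Finset.card_univ, Fintype.card_fin,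
    nsmul_eq_mul]

theorem sum_cost_add_transfer (c : Fin (n + n) → ℝ) (i : Fin n) :
    ∑ l, cost (c + transfer δ i) (c + transfer δ l) = (n - 1) * (4 * |δ|) := by
  have cost_others : ∀ l ∈ Finset.univ.erase i,
      cost (c + transfer δ i) (c + transfer δ l) = 4 * |δ| :=
    fun l hl ↦ cost_add_transfer c (Finset.ne_of_mem_erase hl).symm
  rw [← Finset.add_sum_erase _ _ (Finset.mem_univ i), cost_self, zero_add,
    Finset.sum_congr rfl cost_others]
  simp [Nat.cast_pred i.pos]

theorem sum_cost_self_add_transfer_le (hn : 2 ≤ n) (c p : Fin (n + n) → ℝ) :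
    ∑ i : Fin n, cost c (c + transfer δ i) ≤ ∑ i, cost p (c + transfer δ i) := by
  refine sum_cost_le_sum_cost_of_perm (finRotate n) (fun i ↦ ?_) p
  have rotate_ne : finRotate n i ≠ i := by
    rw [← Equiv.Perm.mem_support, support_finRotate_of_le hn]
    exact Finset.mem_univ i
  rw [cost_comm, cost_self_add_transfer, cost_self_add_transfer, cost_add_transfer c rotate_ne.symm]
  ring

end Transfer

theorem random_referee_distortion_ge_two_general {ε : ℝ} (hε : 0 < ε) :
    ∃ (m n : ℕ) (v : Fin n → Fin m → ℝ) (popt : Fin m → ℝ),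
      (∀ i, IsBudget (v i)) ∧ IsBudget popt ∧
      (∀ p : Fin m → ℝ, ∑ l, cost popt (v l) ≤ ∑ l, cost p (v l)) ∧
      0 < ∑ l, cost popt (v l) ∧
      ∀ i, (2 - ε) * ∑ l, cost popt (v l) < ∑ l, cost (v i) (v l) := by
  obtain ⟨n, hn⟩ := exists_nat_gt (max 2 (2 / ε))
  have two_le : 2 ≤ n := mod_cast ((le_max_left ..).trans_lt hn).le
  have two_lt_mul : 2 < n * ε := (div_lt_iff₀ hε).1 ((le_max_right ..).trans_lt hn)
  have : NeZero n := ⟨by lia⟩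
  set δ : ℝ := ((n + n : ℕ) : ℝ)⁻¹
  have hδ : 0 < |δ| := by positivity
  have uniform : IsBudget fun _ : Fin (n + n) ↦ δ := isBudget_const_inv
  refine ⟨n + n, n, fun i ↦ (fun _ ↦ δ) + transfer δ i, fun _ ↦ δ,
    uniform.add_transfer fun j ↦ (abs_of_nonneg (uniform.1 j)).le, uniform,
    sum_cost_self_add_transfer_le two_le _, ?_, fun i ↦ ?_⟩
  · rw [sum_cost_self_add_transfer]
    positivity
  · rw [sum_cost_self_add_transfer, sum_cost_add_transfer]
    linarith [mul_pos hδ (sub_pos.2 two_lt_mul)]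

/-- Every Random Referee mechanism has distortion at least 2: for every rule `r` that,
given a vote profile and an ordered triple `(i,j,k)` of sampled voters, outputs either
`v_i` or `v_j`, and every `ε > 0`, there is an instance with positive optimal social
cost where the expected social cost of the output exceeds `(2 − ε)` times the optimum. -/
theorem random_referee_distortion_ge_two
    (r : (m n : ℕ) → (Fin n → Fin m → ℝ) → Fin n → Fin n → Fin n → (Fin m → ℝ))
    (hr : ∀ (m n : ℕ) (v : Fin n → Fin m → ℝ) (i j k : Fin n),
      r m n v i j k = v i ∨ r m n v i j k = v j)
    (ε : ℝ) (hε : 0 < ε) :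
    ∃ (m n : ℕ) (v : Fin n → Fin m → ℝ) (popt : Fin m → ℝ),
      (∀ i, IsBudget (v i)) ∧ IsBudget popt ∧
      (∀ p : Fin m → ℝ, IsBudget p → ∑ l, cost popt (v l) ≤ ∑ l, cost p (v l)) ∧
      0 < ∑ l, cost popt (v l) ∧
      (2 - ε) * ∑ l, cost popt (v l) <
        (1 / (n : ℝ) ^ 3) * ∑ i, ∑ j, ∑ k, ∑ l, cost (r m n v i j k) (v l) := by
  obtain ⟨m, n, v, popt, hv, hpopt, hmin, hpos, hlt⟩ :=
    random_referee_distortion_ge_two_general hε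
  have : Nonempty (Fin n) := Finset.univ_nonempty_iff.1 (Finset.nonempty_of_sum_ne_zero hpos.ne')
  refine ⟨m, n, v, popt, hv, hpopt, fun p _ ↦ hmin p, hpos, ?_⟩
  have vote_lt (i j k : Fin n) :
      (2 - ε) * ∑ l, cost popt (v l) < ∑ l, cost (r m n v i j k) (v l) := by
    rcases hr m n v i j k with h | h <;> simp only [h, hlt]
  simpa only [Fintype.card_fin] using lt_triple_average vote_lt
end

section
/- Lower bound of 1.38 on the distortion of Nash bargaining with three sampled voters: consider the PB instance with m = 2201 projects and n = 5200 voters, where for i = 1,…,2200 voter i's preferred budget v_i is the unit vector o_i (allocation 1 to project i and 0 elsewhere), and for i = 2201,…,5200 voter i's preferred budget is o_{2201}. Then min_{p∈𝔹} Σ_{l=1}^{5200} d(p, v_l) = 4400, and for every function z assigning to each ordered triple (i,j,k) ∈ [5200]³ a Nash bargaining outcome z(i,j,k) for agents v_i, v_j with disagreement point v_k, (1/5200³) Σ_{(i,j,k)∈[5200]³} Σ_{l=1}^{5200} d(z(i,j,k), v_l) > 1.38 · 4400. In particular, the distortion of every Nash bargaining scheme with three uniformly sampled voters exceeds 1.38.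 -/
/-- The overlap utility `u(a,b)`. -/
noncomputable def util {m : ℕ} (a b : Fin m → ℝ) : ℝ := ∑ j, min (a j) (b j)

/-- `z` is a Nash bargaining outcome for agents `a, b` with disagreement point `c`. -/
def NashOutcome {m : ℕ} (a b c z : Fin m → ℝ) : Prop :=
  IsBudget z ∧ util a c ≤ util a z ∧ util b c ≤ util b z ∧
  (∀ z' : Fin m → ℝ, IsBudget z' → util a c ≤ util a z' → util b c ≤ util b z' →
    (util a z' - util a c) * (util b z' - util b c) ≤
      (util a z - util a c) * (util b z - util b c)) ∧
  (∀ z' : Fin m → ℝ, IsBudget z' → util a c ≤ util a z' → util b c ≤ util b z' →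
    (util a z' - util a c) * (util b z' - util b c) =
      (util a z - util a c) * (util b z - util b c) →
    util c z' ≤ util c z)

/-- The lower-bound PB instance: 2201 projects and 5200 voters; voter `i < 2200`
prefers the unit vector `o_i`, and every voter `i ≥ 2200` prefers `o_{2200}`
(0-based indexing of the 2201-st project). -/
noncomputable def lbProfile : Fin 5200 → Fin 2201 → ℝ :=
  fun i j => if (j : ℕ) = min (i : ℕ) 2200 then 1 else 0

/-!
A voter whose favourite is project `x` has utility `p x` from a budget `p`. So if two agents want
`a` and `b` and the disagreement point is the unit vector of `c`, the Nash product has a unique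
maximizer: the disagreement point itself when `c` is `a` or `b`, since the agent wanting `c`
cannot lose, and the midpoint of the agents' budgets otherwise. If `W` out of `n` voters want
project `t`, the `n³` triples therefore give `t` a total allocation of at most `n² W + n W² - W³`.
In the instance the social cost of `p` is `10398 - 5998 p t` for the popular project `t`, and
inserting `n = 5200` and `W = 3000` gives the bound.
-/

/-- `z` maximizes the Nash product of agents `a, b` with disagreement point `c`. In contrast to
`NashOutcome`, ties between maximizers are not broken. -/
structure MaximizesNashProduct {m : ℕ} (a b c z : Fin m → ℝ) : Prop where
  isBudget : IsBudget z
  left_le : util a c ≤ util a z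
  right_le : util b c ≤ util b z
  product_le : ∀ z' : Fin m → ℝ, IsBudget z' → util a c ≤ util a z' → util b c ≤ util b z' →
    (util a z' - util a c) * (util b z' - util b c) ≤
      (util a z - util a c) * (util b z - util b c)

theorem NashOutcome.maximizesNashProduct {m : ℕ} {a b c z : Fin m → ℝ}
    (h : NashOutcome a b c z) : MaximizesNashProduct a b c z :=
  ⟨h.1, h.2.1, h.2.2.1, h.2.2.2.1⟩

section Budget

variable {m : ℕ} {p q : Fin m → ℝ}

theorem isBudget_iff_mem_stdSimplex : IsBudget p ↔ p ∈ stdSimplex ℝ (Fin m) :=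
  Iff.rfl

theorem isBudget_single (x : Fin m) : IsBudget (Pi.single x 1) :=
  single_mem_stdSimplex ℝ x

theorem util_comm (p q : Fin m → ℝ) : util p q = util q p := by
  simp only [util, min_comm]

namespace IsBudget

protected theorem midpoint (hp : IsBudget p) (hq : IsBudget q) : IsBudget (midpoint ℝ p q) :=
  (convex_stdSimplex ℝ (Fin m)).midpoint_mem hp hq

theorem le_one (hp : IsBudget p) (x : Fin m) : p x ≤ 1 :=
  (mem_Icc_of_mem_stdSimplex (isBudget_iff_mem_stdSimplex.1 hp) x).2

theorem add_le_one (hp : IsBudget p) {x y : Fin m} (hxy : x ≠ y) : p x + p y ≤ 1 := by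
  rw [← hp.2, ← Finset.sum_pair hxy]
  exact Finset.sum_le_univ_sum_of_nonneg hp.1

theorem eq_of_le (hp : IsBudget p) (hq : IsBudget q) (h : p ≤ q) : p = q := by
  have hsum : ∑ j, p j = ∑ j, q j := hp.2.trans hq.2.symm
  exact funext fun j =>
    (Finset.sum_eq_sum_iff_of_le fun j _ => h j).1 hsum j (Finset.mem_univ j)

theorem eq_single_of_one_le (hp : IsBudget p) {x : Fin m} (hx : 1 ≤ p x) :
    p = Pi.single x 1 :=
  ((isBudget_single x).eq_of_le hp (update_le_iff.2 ⟨hx, fun j _ => hp.1 j⟩)).symm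

theorem cost_eq (hp : IsBudget p) (hq : IsBudget q) : cost p q = 2 - 2 * util p q := by
  have habs (j) : |p j - q j| = p j + q j - 2 * min (p j) (q j) := by
    linarith [max_sub_min_eq_abs' (p j) (q j), max_add_min (p j) (q j)]
  simp only [cost, util, habs, Finset.sum_sub_distrib, Finset.sum_add_distrib, hp.2, hq.2,
    Finset.mul_sum]
  norm_num

theorem util_single (hp : IsBudget p) (x : Fin m) : util (Pi.single x 1) p = p x := by
  rw [util, Fintype.sum_eq_single x fun j hj => by simp [hj, hp.1 j], Pi.single_eq_same,
    min_eq_right (hp.le_one x)]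

theorem cost_single (hp : IsBudget p) (x : Fin m) : cost p (Pi.single x 1) = 2 - 2 * p x := by
  rw [hp.cost_eq (isBudget_single x), util_comm, hp.util_single]

end IsBudget

end Budget

namespace MaximizesNashProduct

variable {m : ℕ} {a b c : Fin m} {z : Fin m → ℝ}

theorem eq_single (h : MaximizesNashProduct (Pi.single a 1) (Pi.single b 1) (Pi.single c 1) z)
    (hc : c = a ∨ c = b) : z = Pi.single c 1 := by
  have ha := h.left_le
  have hb := h.right_le
  rw [h.isBudget.util_single, (isBudget_single c).util_single] at ha hb
  apply h.isBudget.eq_single_of_one_le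
  rcases hc with rfl | rfl
  · simpa using ha
  · simpa using hb

theorem eq_midpoint (h : MaximizesNashProduct (Pi.single a 1) (Pi.single b 1) (Pi.single c 1) z)
    (hca : c ≠ a) (hcb : c ≠ b) :
    z = midpoint ℝ (Pi.single a 1 : Fin m → ℝ) (Pi.single b 1) := by
  have hz := h.isBudget
  have hw := (isBudget_single a).midpoint (isBudget_single b)
  have hprod := h.product_le _ hw
  simp only [hz.util_single, hw.util_single, (isBudget_single c).util_single,
    Pi.single_eq_of_ne hca.symm, Pi.single_eq_of_ne hcb.symm, sub_zero] at hprod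
  specialize hprod (hw.1 a) (hw.1 b)
  rcases eq_or_ne a b with rfl | hab
  · rw [midpoint_self, Pi.single_eq_same] at hprod
    rw [midpoint_self]
    exact hz.eq_single_of_one_le (by nlinarith [hz.1 a])
  · have hadd := hz.add_le_one hab
    have hprod : 1 / 4 ≤ z a * z b := by
      norm_num [midpoint_eq_smul_add, hab, hab.symm] at hprod
      linarith
    have heq : z a = z b := by
      have hsq : (z a - z b) ^ 2 ≤ 0 := by nlinarith [hz.1 a, hz.1 b]
      exact sub_eq_zero.1 ((sq_nonpos_iff _).1 hsq)
    have hb : 1 / 2 ≤ z b := by nlinarith [hz.1 b]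
    refine (hw.eq_of_le hz fun j => ?_).symm
    rcases eq_or_ne j a with rfl | hja
    · simpa [midpoint_eq_smul_add, hab, heq] using hb
    rcases eq_or_ne j b with rfl | hjb
    · simpa [midpoint_eq_smul_add, hab.symm] using hb
    · simpa [midpoint_eq_smul_add, hja, hjb] using hz.1 j

/-- The right-hand side is the polynomial in the 0/1 values `e a`, `e b`, `e c` that equals `1` if
at least two of `a`, `b`, `c` are `t`, `1 / 2` if only `a` or only `b` is, and `0` otherwise. -/
theorem apply_le (h : MaximizesNashProduct (Pi.single a 1) (Pi.single b 1) (Pi.single c 1) z)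
    (t : Fin m) {e : Fin m → ℝ} (he : e = Pi.single t 1) :
    z t ≤ (e a + e b) * (1 + e c) / 2 - e a * e b * e c := by
  have he01 (x : Fin m) : e x = 0 ∨ e x = 1 := by
    rw [he, Pi.single_apply]
    exact (ite_eq_or_eq _ _ _).symm
  have hsingle (x : Fin m) : (Pi.single x 1 : Fin m → ℝ) t = e x := by
    rw [he, Pi.single_comm]
  by_cases hc : c = a ∨ c = b
  · have hz : z t = e c := by rw [h.eq_single hc, hsingle]
    have hc : e c = e a ∨ e c = e b := hc.imp (congrArg e) (congrArg e)
    rcases hc with hc | hc <;> rcases he01 a with ha | ha <;> rcases he01 b with hb | hb <;>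
      norm_num [hz, hc, ha, hb]
  · rw [not_or] at hc
    have hz : z t = (e a + e b) / 2 := by
      rw [h.eq_midpoint hc.1 hc.2, ← hsingle, ← hsingle, midpoint_eq_smul_add]
      simp [div_eq_inv_mul]
    rcases he01 a with ha | ha <;> rcases he01 b with hb | hb <;> rcases he01 c with hc | hc <;>
      norm_num [hz, ha, hb, hc]

theorem sum_apply_le {ι : Type*} [Fintype ι] {σ : ι → Fin m} {z : ι → ι → ι → Fin m → ℝ}
    (h : ∀ i j k, MaximizesNashProduct (Pi.single (σ i) 1) (Pi.single (σ j) 1)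
      (Pi.single (σ k) 1) (z i j k))
    {t : Fin m} {W : ℕ} (hW : Finset.card {i | σ i = t} = W) :
    ∑ i, ∑ j, ∑ k, z i j k t ≤ (Fintype.card ι : ℝ) ^ 2 * W + Fintype.card ι * W ^ 2 - W ^ 3 := by
  set e : Fin m → ℝ := Pi.single t 1 with he
  have hsum : ∑ i, e (σ i) = W := by simp only [he, Pi.single_apply, Finset.sum_boole, hW]
  calc ∑ i, ∑ j, ∑ k, z i j k t
      ≤ ∑ i, ∑ j, ∑ k, ((e (σ i) + e (σ j)) * (1 + e (σ k)) / 2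
          - e (σ i) * e (σ j) * e (σ k)) := by
        gcongr with i _ j _ k _
        exact (h i j k).apply_le t he
    _ = (Fintype.card ι : ℝ) ^ 2 * W + Fintype.card ι * W ^ 2 - W ^ 3 := by
        simp only [Finset.sum_sub_distrib, Finset.sum_add_distrib, ← Finset.sum_div,
          ← Finset.mul_sum, ← Finset.sum_mul, Finset.sum_const, Finset.card_univ, hsum,
          nsmul_eq_mul, mul_one]
        ring

end MaximizesNashProduct

theorem sum_clamp {M : Type*} [AddCommMonoid M] (k r : ℕ) (f : Fin (k + 1) → M) :
    ∑ i : Fin (k + 1 + r), f (Fin.clamp i k) = ∑ x, f x + r • f (Fin.last k) := by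
  have hlt (x : Fin (k + 1)) : Fin.clamp x k = x := Fin.ext (min_eq_left x.is_le)
  have hge (y : Fin r) : Fin.clamp (k + 1 + y) k = Fin.last k := Fin.clamp_eq_last _ _ (by omega)
  simp [Fin.sum_univ_add, hlt, hge]

theorem card_clamp_eq_last (k r : ℕ) :
    Finset.card {i : Fin (k + 1 + r) | Fin.clamp i k = Fin.last k} = r + 1 := by
  rw [Finset.card_filter, sum_clamp k r fun x => if x = Fin.last k then 1 else 0]
  simp [add_comm]

theorem IsBudget.sum_cost_single_clamp {k : ℕ} {p : Fin (k + 1) → ℝ} (hp : IsBudget p) (r : ℕ) :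
    ∑ l : Fin (k + 1 + r), cost p (Pi.single (Fin.clamp l k) 1) =
      2 * (k + r) - 2 * r * p (Fin.last k) := by
  simp only [hp.cost_single, Finset.sum_sub_distrib, ← Finset.mul_sum, sum_clamp, hp.2,
    Finset.sum_const, Finset.card_univ, Fintype.card_fin, nsmul_eq_mul]
  push_cast
  ring

theorem lbProfile_eq_single (i : Fin 5200) : lbProfile i = Pi.single (Fin.clamp i 2200) 1 := by
  ext j
  simp [lbProfile, Pi.single_apply, Fin.ext_iff]

theorem IsBudget.sum_cost_lbProfile {p : Fin 2201 → ℝ} (hp : IsBudget p) :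
    ∑ l, cost p (lbProfile l) = 10398 - 5998 * p (Fin.last 2200) := by
  simp only [lbProfile_eq_single]
  refine (hp.sum_cost_single_clamp 2999).trans ?_
  norm_num

theorem nash_lower_bound_138_general :
    (∀ p : Fin 2201 → ℝ, IsBudget p → 4400 ≤ ∑ l, cost p (lbProfile l)) ∧
    (∃ p : Fin 2201 → ℝ, IsBudget p ∧ ∑ l, cost p (lbProfile l) = 4400) ∧
    (∀ z : Fin 5200 → Fin 5200 → Fin 5200 → (Fin 2201 → ℝ),
      (∀ i j k, MaximizesNashProduct (lbProfile i) (lbProfile j) (lbProfile k) (z i j k)) →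
      1.38 * 4400 <
        (1 / (5200 : ℝ) ^ 3) * ∑ i, ∑ j, ∑ k, ∑ l, cost (z i j k) (lbProfile l)) := by
  refine ⟨fun p hp => ?_, ⟨Pi.single (Fin.last 2200) 1, isBudget_single _, ?_⟩, fun z hz => ?_⟩
  · rw [hp.sum_cost_lbProfile]
    linarith [hp.le_one (Fin.last 2200)]
  · rw [(isBudget_single _).sum_cost_lbProfile, Pi.single_eq_same]
    norm_num
  · have hcost (i j k) := (hz i j k).isBudget.sum_cost_lbProfile
    simp only [lbProfile_eq_single] at hz
    have hlast := MaximizesNashProduct.sum_apply_le hz (card_clamp_eq_last 2200 2999)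
    simp only [hcost, Finset.sum_sub_distrib, ← Finset.mul_sum, Finset.sum_const,
      Finset.card_univ, Fintype.card_fin, nsmul_eq_mul]
    rw [one_div_mul_eq_div, lt_div_iff₀ (by norm_num)]
    norm_num at hlast ⊢
    linarith

/-- Lower bound of 1.38 on the distortion of Nash bargaining with three sampled
voters on the concrete instance `lbProfile`: the optimal social cost is 4400, and
for every choice function `z` of Nash bargaining outcomes for each ordered triple of
voters, the expected social cost exceeds `1.38 · 4400`. -/
theorem nash_lower_bound_138 :
    (∀ p : Fin 2201 → ℝ, IsBudget p → 4400 ≤ ∑ l, cost p (lbProfile l)) ∧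
    (∃ p : Fin 2201 → ℝ, IsBudget p ∧ ∑ l, cost p (lbProfile l) = 4400) ∧
    (∀ z : Fin 5200 → Fin 5200 → Fin 5200 → (Fin 2201 → ℝ),
      (∀ i j k, NashOutcome (lbProfile i) (lbProfile j) (lbProfile k) (z i j k)) →
      1.38 * 4400 <
        (1 / (5200 : ℝ) ^ 3) * ∑ i, ∑ j, ∑ k, ∑ l, cost (z i j k) (lbProfile l)) := by
  refine nash_lower_bound_138_general.imp_right (And.imp_right fun h z hz => h z fun i j k => ?_)
  exact (hz i j k).maximizesNashProduct
end

section
/- The distortion of the class of median schemes is bounded by its pessimistic distortion over 6 voters. Precisely, let c ≥ 0 and suppose that for every 6-tuple of budgets (w_1,…,w_6) ∈ 𝔹^6 and every family (p^R), indexed by the 3-element subsets R of [6], such that each p^R ∈ 𝔹 is a median-scheme outcome for the triple (w_r)_{r∈R}, one has Σ_{R, |R|=3} Σ_{i ∈ [6]∖R} d(p^R, w_i) ≤ 10·c·min_{v∈𝔹} Σ_{i=1}^6 d(v, w_i). Then for every n ≥ 1, every vote profile (v_1,…,v_n) ∈ 𝔹^n, and every function h, symmetric in its three arguments, assigning to each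 ordered triple (i,j,k) ∈ [n]³ a median-scheme outcome h(i,j,k) for (v_i, v_j, v_k), one has (1/n⁴) Σ_{(i,j,k,l)∈[n]⁴} d(h(i,j,k), v_l) ≤ c·(1/n)·min_{p∈𝔹} Σ_{l=1}^n d(p, v_l). -/
/-- `z` is a median-scheme outcome for `(a,b,c)`: a budget maximizing
`u(z,a) + u(z,b) + u(z,c)` over all budgets. -/
def MedianOutcome {m : ℕ} (a b c z : Fin m → ℝ) : Prop :=
  IsBudget z ∧ ∀ z' : Fin m → ℝ, IsBudget z' →
    util z' a + util z' b + util z' c ≤ util z a + util z b + util z c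

/-- `z` is a median-scheme outcome for the triple of budgets `(w_r)_{r∈R}`:
a budget maximizing `Σ_{r∈R} u(z, w_r)` over all budgets. -/
def MedianOutcomeOn {m : ℕ} {ι : Type*} [Fintype ι]
    (w : ι → Fin m → ℝ) (R : Finset ι) (z : Fin m → ℝ) : Prop :=
  IsBudget z ∧ ∀ z' : Fin m → ℝ, IsBudget z' →
    ∑ r ∈ R, util z' (w r) ≤ ∑ r ∈ R, util z (w r)

/-!
Draw `f : ι → N` uniformly at random, i.e. a sample of voters with repetition. For injective
`g : κ → ι` the subsample `f ∘ g` is again uniform, so for a `k`-subset `R` of `ι` and `i ∉ R` the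
restriction of `f` to `R` and the value `f i` are distributed like the voters drawn by the mechanism
and an independent voter evaluating its outcome. Averaging the pessimistic inequality over `f`
therefore yields, on the left, the expected cost of the mechanism once for each of the
`(card ι).choose k * (card ι - k)` pairs `(R, i)` and, on the right, the average cost of the
comparison budget once for each `i`. For `card ι = 6` and `k = 3` these multiplicities are
`60` and `6`, which accounts for the factor `10`.
-/

open Finset Fintype Function
open scoped BigOperators

section UniformSample

variable {α β ι N M : Type*} [Fintype N] [AddCommMonoid M] [Module ℚ≥0 M]

lemma expect_sum_arrow [Fintype α] [DecidableEq α] [Fintype β] [DecidableEq β]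
    (F : (α → N) → (β → N) → M) :
    𝔼 f : α ⊕ β → N, F (f ∘ Sum.inl) (f ∘ Sum.inr) = 𝔼 s, 𝔼 t, F s t :=
  (Fintype.expect_equiv (Equiv.sumArrowEquivProdArrow α β N) _ (fun q ↦ F q.1 q.2)
    fun _ ↦ rfl).trans (expect_product' univ univ F)

lemma expect_fin_succ_arrow {k : ℕ} (F : (Fin (k + 1) → N) → M) :
    𝔼 t, F t = 𝔼 i, 𝔼 t : Fin k → N, F (Fin.cons i t) :=
  (Fintype.expect_equiv (Fin.consEquiv fun _ : Fin (k + 1) ↦ N)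
    (fun q ↦ F (Fin.cons q.1 q.2)) F fun _ ↦ rfl).symm.trans
    (expect_product' univ univ fun i t ↦ F (Fin.cons i t))

lemma expect_fin_three_arrow (F : N → N → N → M) :
    𝔼 s : Fin 3 → N, F (s 0) (s 1) (s 2) = 𝔼 i, 𝔼 j, 𝔼 k, F i j k := by
  simp only [expect_fin_succ_arrow, univ_unique, expect_singleton]
  rfl

variable [Fintype ι] [DecidableEq ι] [Nonempty N]

lemma expect_comp_of_injective [Fintype α] [DecidableEq α] {g : α → ι} (hg : Injective g)
    (F : (α → N) → M) :
    𝔼 f : ι → N, F (f ∘ g) = 𝔼 s, F s := by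
  classical
  let e : α ⊕ ↥(Set.range g)ᶜ ≃ ι :=
    ((Equiv.ofInjective g hg).sumCongr (Equiv.refl _)).trans (Equiv.Set.sumCompl _)
  calc 𝔼 f : ι → N, F (f ∘ g)
      = 𝔼 f : α ⊕ ↥(Set.range g)ᶜ → N, F (f ∘ Sum.inl) :=
        Fintype.expect_equiv (e.symm.arrowCongr (Equiv.refl N)) _ _ fun _ ↦ rfl
    _ = 𝔼 s, 𝔼 _t : ↥(Set.range g)ᶜ → N, F s := expect_sum_arrow fun s _ ↦ F s
    _ = 𝔼 s, F s := by simp only [Fintype.expect_const]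

lemma expect_eval (i : ι) (G : N → M) : 𝔼 f : ι → N, G (f i) = 𝔼 l, G l :=
  (expect_comp_of_injective (injective_of_subsingleton fun _ : Unit ↦ i) fun t ↦ G (t ())).trans
    (Fintype.expect_equiv (Equiv.funUnique Unit N) _ _ fun _ ↦ rfl)

lemma expect_sum_eval (G : N → M) : 𝔼 f : ι → N, ∑ i, G (f i) = card ι • 𝔼 l, G l := by
  simp only [expect_sum_comm, expect_eval _ G, sum_const, card_univ]

lemma expect_comp_eval_of_notMem_range [Fintype α] [DecidableEq α] {g : α → ι}
    (hg : Injective g) {i : ι} (hi : i ∉ Set.range g) (F : (α → N) → N → M) :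
    𝔼 f : ι → N, F (f ∘ g) (f i) = 𝔼 s, 𝔼 l, F s l := by
  have hgi : Injective (Sum.elim g fun _ : Unit ↦ i) :=
    hg.sumElim (injective_of_subsingleton _) fun a _ h ↦ hi ⟨a, h⟩
  calc 𝔼 f : ι → N, F (f ∘ g) (f i)
      = 𝔼 f : α ⊕ Unit → N, F (f ∘ Sum.inl) (f (Sum.inr ())) :=
        expect_comp_of_injective hgi fun f ↦ F (f ∘ Sum.inl) (f (Sum.inr ()))
    _ = 𝔼 s, 𝔼 t : Unit → N, F s (t ()) := expect_sum_arrow fun s t ↦ F s (t ())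
    _ = 𝔼 s, 𝔼 l, F s l := by simp only [expect_eval]

lemma expect_sum_powersetCard_sum_compl {k : ℕ} {e : Finset ι → Fin k ↪ ι}
    (he : ∀ R, #R = k → univ.map (e R) = R) (F : (Fin k → N) → N → M) :
    𝔼 f : ι → N, ∑ R ∈ univ.powersetCard k, ∑ i ∈ Rᶜ, F (f ∘ e R) (f i) =
      ((card ι).choose k * (card ι - k)) • 𝔼 s, 𝔼 l, F s l := by
  have expect_term : ∀ R ∈ univ.powersetCard k, ∀ i ∈ Rᶜ,
      𝔼 f : ι → N, F (f ∘ e R) (f i) = 𝔼 s, 𝔼 l, F s l := by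
    intro R hR i hi
    rw [mem_compl, ← he R (mem_powersetCard_univ.1 hR)] at hi
    exact expect_comp_eval_of_notMem_range (e R).injective (by simpa using hi) F
  calc 𝔼 f : ι → N, ∑ R ∈ univ.powersetCard k, ∑ i ∈ Rᶜ, F (f ∘ e R) (f i)
      = ∑ R ∈ univ.powersetCard k, ∑ i ∈ Rᶜ, 𝔼 f : ι → N, F (f ∘ e R) (f i) := by
        simp only [expect_sum_comm]
    _ = ∑ _R ∈ univ.powersetCard k, (card ι - k) • 𝔼 s, 𝔼 l, F s l :=
        sum_congr rfl fun R hR ↦ by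
          rw [sum_congr rfl (expect_term R hR), sum_const, card_compl,
            mem_powersetCard_univ.1 hR]
    _ = ((card ι).choose k * (card ι - k)) • 𝔼 s, 𝔼 l, F s l := by
        rw [sum_const, card_powersetCard, card_univ, mul_smul]

end UniformSample

lemma exists_embedding_univ_map_eq {ι : Type*} [Fintype ι] {k : ℕ} (hk : k ≤ card ι) :
    ∃ e : Finset ι → Fin k ↪ ι, ∀ R, #R = k → univ.map (e R) = R := by
  have : Nonempty (Fin k ↪ ι) := Embedding.nonempty_of_card_le (by simpa using hk)
  have enumerate (R : Finset ι) (hR : #R = k) : ∃ e : Fin k ↪ ι, univ.map e = R :=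
    ⟨(R.equivFinOfCardEq hR).symm.toEmbedding.trans (Embedding.subtype _), by
      rw [← map_map, map_univ_equiv, univ_eq_attach, attach_map_val]⟩
  choose! e he using enumerate
  exact ⟨e, he⟩

section MedianOutcome

variable {m : ℕ}

lemma medianOutcomeOn_map {ι κ : Type*} [Fintype ι] [Fintype κ] (w : ι → Fin m → ℝ) (e : κ ↪ ι)
    (z : Fin m → ℝ) :
    MedianOutcomeOn w (univ.map e) z ↔ MedianOutcomeOn (w ∘ e) univ z := by
  simp only [MedianOutcomeOn, sum_map, comp_apply]

lemma medianOutcomeOn_univ_fin_three (w : Fin 3 → Fin m → ℝ) (z : Fin m → ℝ) :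
    MedianOutcomeOn w univ z ↔ MedianOutcome (w 0) (w 1) (w 2) z := by
  simp only [MedianOutcomeOn, MedianOutcome, Fin.sum_univ_three]

end MedianOutcome

theorem expect_cost_le_of_pessimistic_cost_le {m k : ℕ} {ι N : Type*} [Fintype ι] [DecidableEq ι]
    [Fintype N] [Nonempty N] (hk : k ≤ card ι) (C : ℝ)
    (hPD : ∀ w : ι → Fin m → ℝ, (∀ i, IsBudget (w i)) →
      ∀ p : Finset ι → (Fin m → ℝ),
        (∀ R ∈ univ.powersetCard k, MedianOutcomeOn w R (p R)) →
        ∀ v0 : Fin m → ℝ, IsBudget v0 →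
          ∑ R ∈ univ.powersetCard k, ∑ i ∈ Rᶜ, cost (p R) (w i) ≤ C * ∑ i, cost v0 (w i))
    (v : N → Fin m → ℝ) (hv : ∀ l, IsBudget (v l)) (h : (Fin k → N) → Fin m → ℝ)
    (hmed : ∀ s, MedianOutcomeOn (v ∘ s) univ (h s)) (p : Fin m → ℝ) (hp : IsBudget p) :
    ((card ι).choose k * (card ι - k) : ℕ) * 𝔼 s, 𝔼 l, cost (h s) (v l) ≤
      C * (card ι * 𝔼 l, cost p (v l)) := by
  obtain ⟨e, he⟩ := exists_embedding_univ_map_eq hk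
  have sample_le (f : ι → N) :
      ∑ R ∈ univ.powersetCard k, ∑ i ∈ Rᶜ, cost (h (f ∘ e R)) (v (f i)) ≤
        C * ∑ i, cost p (v (f i)) := by
    refine hPD (v ∘ f) (fun i ↦ hv (f i)) (fun R ↦ h (f ∘ e R)) (fun R hR ↦ ?_) p hp
    have map_eq := he R (mem_powersetCard_univ.1 hR)
    rw [← map_eq, medianOutcomeOn_map, map_eq]
    exact hmed (f ∘ e R)
  calc ((card ι).choose k * (card ι - k) : ℕ) * 𝔼 s, 𝔼 l, cost (h s) (v l)
      = 𝔼 f : ι → N, ∑ R ∈ univ.powersetCard k, ∑ i ∈ Rᶜ, cost (h (f ∘ e R)) (v (f i)) := by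
        rw [expect_sum_powersetCard_sum_compl he fun s l ↦ cost (h s) (v l), nsmul_eq_mul]
    _ ≤ 𝔼 f : ι → N, C * ∑ i, cost p (v (f i)) := expect_le_expect fun f _ ↦ sample_le f
    _ = C * (card ι * 𝔼 l, cost p (v l)) := by
        rw [← mul_expect, expect_sum_eval fun l ↦ cost p (v l), nsmul_eq_mul]

theorem distortion_le_pessimistic_distortion_general {m : ℕ} {N : Type*} [Fintype N] [Nonempty N]
    (c : ℝ)
    (hPD : ∀ w : Fin 6 → Fin m → ℝ, (∀ i, IsBudget (w i)) →
      ∀ p : Finset (Fin 6) → (Fin m → ℝ),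
        (∀ R ∈ Finset.univ.powersetCard 3, MedianOutcomeOn w R (p R)) →
        ∀ v0 : Fin m → ℝ, IsBudget v0 →
          ∑ R ∈ Finset.univ.powersetCard 3, ∑ i ∈ Rᶜ, cost (p R) (w i) ≤
            10 * c * ∑ i, cost v0 (w i))
    (v : N → Fin m → ℝ) (hv : ∀ i, IsBudget (v i)) (h : N → N → N → (Fin m → ℝ))
    (hmed : ∀ i j k, MedianOutcome (v i) (v j) (v k) (h i j k))
    (p : Fin m → ℝ) (hp : IsBudget p) :
    (1 / (card N : ℝ) ^ 4) * ∑ i, ∑ j, ∑ k, ∑ l, cost (h i j k) (v l) ≤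
      c * ((1 / (card N : ℝ)) * ∑ l, cost p (v l)) := by
  have expect_triad : 𝔼 s : Fin 3 → N, 𝔼 l, cost (h (s 0) (s 1) (s 2)) (v l) =
      (1 / (card N : ℝ) ^ 4) * ∑ i, ∑ j, ∑ k, ∑ l, cost (h i j k) (v l) := by
    rw [expect_fin_three_arrow fun i j k ↦ 𝔼 l, cost (h i j k) (v l)]
    simp only [Fintype.expect_eq_sum_div_card, ← sum_div]
    ring
  have expect_comparison : 𝔼 l, cost p (v l) = (1 / (card N : ℝ)) * ∑ l, cost p (v l) := by
    rw [Fintype.expect_eq_sum_div_card, div_eq_inv_mul, one_div]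
  have averaged := expect_cost_le_of_pessimistic_cost_le (by simp) (10 * c) hPD v hv
    (fun s ↦ h (s 0) (s 1) (s 2))
    (fun s ↦ (medianOutcomeOn_univ_fin_three _ _).2 (hmed (s 0) (s 1) (s 2))) p hp
  have multiplicity : (card (Fin 6)).choose 3 * (card (Fin 6) - 3) = 60 := by decide
  rw [expect_triad, expect_comparison, multiplicity, Fintype.card_fin] at averaged
  push_cast at averaged
  linarith

/-- The distortion of the class of median schemes is bounded by its pessimistic
distortion over 6 voters: if for every 6-tuple of budgets and every family of
median-scheme outcomes indexed by the 3-element subsets `R ⊆ [6]` the pessimistic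
social cost is at most `10·c` times the optimal social cost, then for every vote
profile and every symmetric median-scheme selection `h`, the expected social cost of
the triadic mechanism is at most `c` times `(1/n)` times the optimal social cost. -/
theorem distortion_le_pessimistic_distortion {m : ℕ} (c : ℝ) (hc : 0 ≤ c)
    (hPD : ∀ w : Fin 6 → Fin m → ℝ, (∀ i, IsBudget (w i)) →
      ∀ p : Finset (Fin 6) → (Fin m → ℝ),
        (∀ R ∈ Finset.univ.powersetCard 3, MedianOutcomeOn w R (p R)) →
        ∀ v0 : Fin m → ℝ, IsBudget v0 →
          ∑ R ∈ Finset.univ.powersetCard 3, ∑ i ∈ Rᶜ, cost (p R) (w i) ≤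
            10 * c * ∑ i, cost v0 (w i)) :
    ∀ n : ℕ, 1 ≤ n → ∀ v : Fin n → Fin m → ℝ, (∀ i, IsBudget (v i)) →
      ∀ h : Fin n → Fin n → Fin n → (Fin m → ℝ),
        (∀ i j k, h i j k = h j i k) →
        (∀ i j k, h i j k = h i k j) →
        (∀ i j k, MedianOutcome (v i) (v j) (v k) (h i j k)) →
        ∀ popt : Fin m → ℝ, IsBudget popt →
          (∀ p : Fin m → ℝ, IsBudget p → ∑ l, cost popt (v l) ≤ ∑ l, cost p (v l)) →
          (1 / (n : ℝ) ^ 4) * ∑ i, ∑ j, ∑ k, ∑ l, cost (h i j k) (v l) ≤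
            c * ((1 / (n : ℝ)) * ∑ l, cost popt (v l)) := by
  intro n hn v hv h _ _ hmed popt hpopt _
  have : NeZero n := ⟨Nat.one_le_iff_ne_zero.1 hn⟩
  simpa using distortion_le_pessimistic_distortion_general c hPD v hv h hmed popt hpopt
end
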